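/- Let c > 0, d > 2 and m > 0, and set g(x) = ((1 + c·d·x)/(d + c·x))³. If η₁(c,d) < m < η₂(c,d), then the equation g(x) = m·x has exactly 3 solutions with x > 0; if m = η₁(c,d) or m = η₂(c,d), then the equation g(x) = m·x has exactly 2 solutions with x > 0. -/

import Mathlib

/-- The first critical tangency slope `η₁(c,d)`. -/
noncomputable def eta₁ (c d : ℝ) : ℝ :=
  -(c * d ^ 4 * (1 - d ^ 2 + Real.sqrt (4 - 5 * d ^ 2 + d ^ 4)) ^ 3)
    / ((2 - 2 * d ^ 2 + Real.sqrt (4 - 5 * d ^ 2 + d ^ 4)) ^ 3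
        * (2 - d ^ 2 + Real.sqrt (4 - 5 * d ^ 2 + d ^ 4)))

/-- The second critical tangency slope `η₂(c,d)`. -/
noncomputable def eta₂ (c d : ℝ) : ℝ :=
  c * d ^ 4 * (-1 + d ^ 2 + Real.sqrt (4 - 5 * d ^ 2 + d ^ 4)) ^ 3
    / ((-2 + d ^ 2 + Real.sqrt (4 - 5 * d ^ 2 + d ^ 4))
        * (-2 + 2 * d ^ 2 + Real.sqrt (4 - 5 * d ^ 2 + d ^ 4)) ^ 3)

/-!
With `g x = ((1 + c d x) / (d + c x)) ^ 3`, a positive `x` solves `g x = m x` exactly when the chord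
slope `g x / x` equals `m`. The derivative of the chord slope has the sign of
`-(d (c x)² - 2 (d² - 2) c x + d)`, and for `d > 2` this quadratic has two positive roots `r₁ < r₂`.
So the chord slope falls from `+∞` to its value at `r₁`, rises up to `r₂`, and then falls to `0`.
Its values at `r₁` and `r₂`, the slopes of the tangents to the graph of `g` through the origin, are
`η₁` and `η₂`.
-/

open Filter Set Topology

section LevelSets

variable {α β : Type*}

theorem inter_preimage_singleton_eq_of_injOn {f : α → β} {s : Set α} {x : α} {k : β}
    (hf : InjOn f s) (hx : x ∈ s) (hxk : f x = k) : s ∩ f ⁻¹' {k} = {x} := by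
  ext y
  constructor
  · rintro ⟨hy, hyk⟩
    exact hf hy hx (hyk.trans hxk.symm)
  · rintro rfl
    exact ⟨hx, hxk⟩

/-- A function on `s` that strictly decreases up to `a`, strictly increases from `a` to `b`, and
strictly decreases from `b` on. Both turning points are required to lie in `s`. -/
structure StrictAntiMonoAntiOn [Preorder α] [Preorder β] (f : α → β) (s : Set α) (a b : α) :
    Prop where
  left_mem : a ∈ s
  right_mem : b ∈ s
  lt : a < b
  strictAntiOn_left : StrictAntiOn f (s ∩ Iic a)
  strictMonoOn : StrictMonoOn f (Icc a b)
  strictAntiOn_right : StrictAntiOn f (s ∩ Ici b)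

section IntermediateValue

variable [ConditionallyCompleteLinearOrder α] [TopologicalSpace α] [OrderTopology α]
  [DenselyOrdered α] [LinearOrder β] [TopologicalSpace β] [OrderClosedTopology β]
  {f : α → β} {s : Set α} {a b : α} {k : β}

theorem exists_mem_inter_Iio_eq [s.OrdConnected] (hf : ContinuousOn f s) (ha : a ∈ s)
    (hk : f a < k) (hl : ∃ x ∈ s ∩ Iic a, k ≤ f x) : ∃ x ∈ s ∩ Iio a, f x = k := by
  obtain ⟨l, ⟨hls, hla⟩, hlk⟩ := hl
  have hsub : Icc l a ⊆ s := s.Icc_subset hls ha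
  obtain ⟨x, hx, hxk⟩ := intermediate_value_Ico' hla (hf.mono hsub) ⟨hk, hlk⟩
  exact ⟨x, ⟨hsub ⟨hx.1, hx.2.le⟩, hx.2⟩, hxk⟩

theorem exists_mem_inter_Ioi_eq [s.OrdConnected] (hf : ContinuousOn f s) (hb : b ∈ s)
    (hk : k < f b) (hr : ∃ x ∈ s ∩ Ici b, f x ≤ k) : ∃ x ∈ s ∩ Ioi b, f x = k := by
  obtain ⟨r, ⟨hrs, hbr⟩, hrk⟩ := hr
  have hsub : Icc b r ⊆ s := s.Icc_subset hb hrs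
  obtain ⟨x, hx, hxk⟩ := intermediate_value_Ioc' hbr (hf.mono hsub) ⟨hrk, hk⟩
  exact ⟨x, ⟨hsub ⟨hx.1.le, hx.2⟩, hx.1⟩, hxk⟩

end IntermediateValue

namespace StrictAntiMonoAntiOn

theorem apply_left_lt_apply_right [Preorder α] [Preorder β] {f : α → β} {s : Set α} {a b : α}
    (hf : StrictAntiMonoAntiOn f s a b) : f a < f b :=
  hf.strictMonoOn (left_mem_Icc.2 hf.lt.le) (right_mem_Icc.2 hf.lt.le) hf.lt

theorem setOf_eq_triple [LinearOrder α] [Preorder β] {f : α → β} {s : Set α} [s.OrdConnected]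
    {a b u v w : α} {k : β} (hf : StrictAntiMonoAntiOn f s a b)
    (hu : u ∈ s ∩ Iic a) (hv : v ∈ Icc a b) (hw : w ∈ s ∩ Ici b)
    (hfu : f u = k) (hfv : f v = k) (hfw : f w = k) : {x | x ∈ s ∧ f x = k} = {u, v, w} := by
  have hcover : s = s ∩ Iic a ∪ (Icc a b ∪ s ∩ Ici b) := by
    have hmid : Icc a b = s ∩ Icc a b :=
      (inter_eq_right.2 (s.Icc_subset hf.left_mem hf.right_mem)).symm
    rw [hmid, ← inter_union_distrib_left, ← inter_union_distrib_left,
      Icc_union_Ici_eq_Ici hf.lt.le, Iic_union_Ici, inter_univ]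
  calc {x | x ∈ s ∧ f x = k}
      = (s ∩ Iic a ∪ (Icc a b ∪ s ∩ Ici b)) ∩ f ⁻¹' {k} := by rw [← hcover]; rfl
    _ = {u} ∪ ({v} ∪ {w}) := by
        rw [union_inter_distrib_right, union_inter_distrib_right,
          inter_preimage_singleton_eq_of_injOn hf.strictAntiOn_left.injOn hu hfu,
          inter_preimage_singleton_eq_of_injOn hf.strictMonoOn.injOn hv hfv,
          inter_preimage_singleton_eq_of_injOn hf.strictAntiOn_right.injOn hw hfw]
    _ = {u, v, w} := by simp only [singleton_union]

variable [ConditionallyCompleteLinearOrder α] [TopologicalSpace α] [OrderTopology α]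
  [DenselyOrdered α] [LinearOrder β] [TopologicalSpace β] [OrderClosedTopology β]
  {f : α → β} {s : Set α} [s.OrdConnected] {a b : α} {k : β}

theorem ncard_setOf_eq_three (hf : StrictAntiMonoAntiOn f s a b) (hcont : ContinuousOn f s)
    (hk : k ∈ Ioo (f a) (f b)) (hl : ∃ x ∈ s ∩ Iic a, k ≤ f x)
    (hr : ∃ x ∈ s ∩ Ici b, f x ≤ k) : {x | x ∈ s ∧ f x = k}.ncard = 3 := by
  obtain ⟨u, ⟨hus, hua⟩, hfu⟩ := exists_mem_inter_Iio_eq hcont hf.left_mem hk.1 hl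
  obtain ⟨v, ⟨hav, hvb⟩, hfv⟩ := intermediate_value_Ioo hf.lt.le
    (hcont.mono (s.Icc_subset hf.left_mem hf.right_mem)) hk
  obtain ⟨w, ⟨hws, hbw⟩, hfw⟩ := exists_mem_inter_Ioi_eq hcont hf.right_mem hk.2 hr
  have huv : u < v := hua.trans hav
  have hvw : v < w := hvb.trans hbw
  exact ncard_eq_three.2 ⟨u, v, w, huv.ne, (huv.trans hvw).ne, hvw.ne,
    hf.setOf_eq_triple ⟨hus, hua.le⟩ ⟨hav.le, hvb.le⟩ ⟨hws, hbw.le⟩ hfu hfv hfw⟩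

theorem ncard_setOf_eq_apply_left (hf : StrictAntiMonoAntiOn f s a b) (hcont : ContinuousOn f s)
    (hr : ∃ x ∈ s ∩ Ici b, f x ≤ f a) : {x | x ∈ s ∧ f x = f a}.ncard = 2 := by
  obtain ⟨w, ⟨hws, hbw⟩, hfw⟩ :=
    exists_mem_inter_Ioi_eq hcont hf.right_mem hf.apply_left_lt_apply_right hr
  rw [hf.setOf_eq_triple ⟨hf.left_mem, self_mem_Iic⟩ (left_mem_Icc.2 hf.lt.le)
    ⟨hws, hbw.le⟩ rfl rfl hfw, insert_idem, ncard_pair (hf.lt.trans hbw).ne]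

theorem ncard_setOf_eq_apply_right (hf : StrictAntiMonoAntiOn f s a b) (hcont : ContinuousOn f s)
    (hl : ∃ x ∈ s ∩ Iic a, f b ≤ f x) : {x | x ∈ s ∧ f x = f b}.ncard = 2 := by
  obtain ⟨u, ⟨hus, hua⟩, hfu⟩ :=
    exists_mem_inter_Iio_eq hcont hf.left_mem hf.apply_left_lt_apply_right hl
  rw [hf.setOf_eq_triple ⟨hus, hua.le⟩ (right_mem_Icc.2 hf.lt.le)
    ⟨hf.right_mem, self_mem_Ici⟩ hfu rfl rfl, pair_eq_singleton, ncard_pair (hua.trans hf.lt).ne]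

end StrictAntiMonoAntiOn

end LevelSets

theorem strictAntiMonoAntiOn_of_hasDerivAt {f w : ℝ → ℝ} {s : Set ℝ} {a b : ℝ}
    (hs : Convex ℝ s) (ha : a ∈ s) (hb : b ∈ s) (hab : a < b)
    (hf : ∀ x ∈ s, HasDerivAt f (w x * ((x - a) * (b - x))) x) (hw : ∀ x ∈ s, 0 < w x) :
    StrictAntiMonoAntiOn f s a b where
  left_mem := ha
  right_mem := hb
  lt := hab
  strictAntiOn_left := by
    refine strictAntiOn_of_hasDerivWithinAt_neg (hs.inter (convex_Iic a))
      (fun x hx => (hf x hx.1).continuousAt.continuousWithinAt)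
      (fun x hx => (hf x (interior_subset hx).1).hasDerivWithinAt) fun x hx => ?_
    rw [interior_inter, interior_Iic] at hx
    have hxa : x < a := hx.2
    exact mul_neg_of_pos_of_neg (hw x (interior_subset hx.1))
      (mul_neg_of_neg_of_pos (sub_neg.2 hxa) (sub_pos.2 (hxa.trans hab)))
  strictMonoOn := by
    have hsub : Icc a b ⊆ s := hs.ordConnected.out ha hb
    refine strictMonoOn_of_hasDerivWithinAt_pos (convex_Icc a b)
      (fun x hx => (hf x (hsub hx)).continuousAt.continuousWithinAt)
      (fun x hx => (hf x (hsub (interior_subset hx))).hasDerivWithinAt) fun x hx => ?_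
    have hxs : x ∈ s := hsub (interior_subset hx)
    rw [interior_Icc] at hx
    exact mul_pos (hw x hxs) (mul_pos (sub_pos.2 hx.1) (sub_pos.2 hx.2))
  strictAntiOn_right := by
    refine strictAntiOn_of_hasDerivWithinAt_neg (hs.inter (convex_Ici b))
      (fun x hx => (hf x hx.1).continuousAt.continuousWithinAt)
      (fun x hx => (hf x (interior_subset hx).1).hasDerivWithinAt) fun x hx => ?_
    rw [interior_inter, interior_Ici] at hx
    have hbx : b < x := hx.2
    exact mul_neg_of_pos_of_neg (hw x (interior_subset hx.1))
      (mul_neg_of_pos_of_neg (sub_pos.2 (hab.trans hbx)) (sub_neg.2 hbx))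

/-- The slope `g x / x` of the chord from the origin to the point of the graph of
`g x = ((1 + c d x) / (d + c x)) ^ 3` over `x`. -/
noncomputable def chordSlope (c d x : ℝ) : ℝ :=
  ((1 + c * d * x) / (d + c * x)) ^ 3 / x

/-- The smaller critical point of `chordSlope c d`, where a line through the origin is tangent to
the graph of `g`. -/
noncomputable def tangencyPoint₁ (c d : ℝ) : ℝ :=
  (d ^ 2 - 2 - √(4 - 5 * d ^ 2 + d ^ 4)) / (c * d)

/-- The larger critical point of `chordSlope c d`, where a line through the origin is tangent to
the graph of `g`. -/
noncomputable def tangencyPoint₂ (c d : ℝ) : ℝ :=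
  (d ^ 2 - 2 + √(4 - 5 * d ^ 2 + d ^ 4)) / (c * d)

section ChordSlope

variable {c d x : ℝ}

theorem hasDerivAt_chordSlope (hx : x ≠ 0) (hdx : d + c * x ≠ 0) :
    HasDerivAt (chordSlope c d)
      (-((1 + c * d * x) ^ 2 * (d * (c * x) ^ 2 - 2 * (d ^ 2 - 2) * (c * x) + d)) /
        (x ^ 2 * (d + c * x) ^ 4)) x := by
  have hnum : HasDerivAt (fun y ↦ 1 + c * d * y) (c * d) x := by
    simpa using ((hasDerivAt_id x).const_mul (c * d)).const_add 1
  have hden : HasDerivAt (fun y ↦ d + c * y) c x := by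
    simpa using ((hasDerivAt_id x).const_mul c).const_add d
  have hratio : HasDerivAt (fun y ↦ (1 + c * d * y) / (d + c * y))
      (c * (d ^ 2 - 1) / (d + c * x) ^ 2) x :=
    (hnum.fun_div hden hdx).congr_deriv (by ring)
  refine ((hratio.fun_pow 3).fun_div (hasDerivAt_id' x) hx).congr_deriv ?_
  simp only [Nat.cast_ofNat, Nat.add_one_sub_one]
  field_simp
  ring

theorem tendsto_chordSlope_nhdsGT_zero (hd : 0 < d) :
    Tendsto (chordSlope c d) (𝓝[>] 0) atTop := by
  have hg : ContinuousAt (fun x ↦ ((1 + c * d * x) / (d + c * x)) ^ 3) 0 := by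
    fun_prop (disch := simpa using hd.ne')
  have hg_lim :
      Tendsto (fun x ↦ ((1 + c * d * x) / (d + c * x)) ^ 3) (𝓝[>] 0) (𝓝 ((1 / d) ^ 3)) := by
    simpa using hg.tendsto.mono_left nhdsWithin_le_nhds
  exact hg_lim.pos_mul_atTop (by positivity) tendsto_inv_nhdsGT_zero

theorem tendsto_chordSlope_atTop (hc : 0 < c) : Tendsto (chordSlope c d) atTop (𝓝 0) := by
  have hden : Tendsto (fun x ↦ d + c * x) atTop atTop :=
    tendsto_atTop_add_const_left _ _ (tendsto_id.const_mul_atTop hc)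
  have hratio : Tendsto (fun x ↦ (1 + c * d * x) / (d + c * x)) atTop (𝓝 d) := by
    have hlim : Tendsto (fun x ↦ d + (1 - d ^ 2) / (d + c * x)) atTop (𝓝 (d + 0)) :=
      tendsto_const_nhds.add (tendsto_const_nhds.div_atTop hden)
    rw [add_zero] at hlim
    refine hlim.congr' ?_
    filter_upwards [hden.eventually_ne_atTop 0] with x hx
    field_simp
    ring
  exact (hratio.pow 3).div_atTop tendsto_id

theorem chordSlope_div_mul (hc : c ≠ 0) (hd : d ≠ 0) (p : ℝ) :
    chordSlope c d (p / (c * d)) = c * d ^ 4 * (1 + p) ^ 3 / ((d ^ 2 + p) ^ 3 * p) := by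
  have hnum : 1 + c * d * (p / (c * d)) = 1 + p := by field_simp
  have hden : d + c * (p / (c * d)) = (d ^ 2 + p) / d := by field_simp
  rw [chordSlope, hnum, hden]
  field_simp

theorem eta₁_eq_chordSlope (hc : c ≠ 0) (hd : d ≠ 0) :
    eta₁ c d = chordSlope c d (tangencyPoint₁ c d) := by
  rw [tangencyPoint₁, chordSlope_div_mul hc hd, eta₁]
  congr 1 <;> ring

theorem eta₂_eq_chordSlope (hc : c ≠ 0) (hd : d ≠ 0) :
    eta₂ c d = chordSlope c d (tangencyPoint₂ c d) := by
  rw [tangencyPoint₂, chordSlope_div_mul hc hd, eta₂]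
  congr 1 <;> ring

theorem tangency_discrim_pos (hd : 2 < d) : 0 < 4 - 5 * d ^ 2 + d ^ 4 := by
  have hsq : 4 < d ^ 2 := by nlinarith
  nlinarith [mul_pos (show 0 < d ^ 2 - 1 by linarith) (sub_pos.2 hsq)]

theorem tangencyPoint₁_pos (hc : 0 < c) (hd : 2 < d) : 0 < tangencyPoint₁ c d := by
  have hsqrt : √(4 - 5 * d ^ 2 + d ^ 4) < d ^ 2 - 2 :=
    (Real.sqrt_lt' (by nlinarith)).2 (by nlinarith)
  exact div_pos (sub_pos.2 hsqrt) (by positivity)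

theorem tangencyPoint₁_lt_tangencyPoint₂ (hc : 0 < c) (hd : 2 < d) :
    tangencyPoint₁ c d < tangencyPoint₂ c d := by
  have hsqrt : 0 < √(4 - 5 * d ^ 2 + d ^ 4) := Real.sqrt_pos.2 (tangency_discrim_pos hd)
  exact div_lt_div_of_pos_right (by linarith) (by positivity)

theorem quadratic_eq_mul_sub_tangencyPoint (hc : c ≠ 0) (hd : d ≠ 0)
    (hdisc : 0 ≤ 4 - 5 * d ^ 2 + d ^ 4) (x : ℝ) :
    d * (c * x) ^ 2 - 2 * (d ^ 2 - 2) * (c * x) + d =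
      c ^ 2 * d * ((x - tangencyPoint₁ c d) * (x - tangencyPoint₂ c d)) := by
  have hsq := Real.sq_sqrt hdisc
  rw [tangencyPoint₁, tangencyPoint₂]
  generalize √(4 - 5 * d ^ 2 + d ^ 4) = r at hsq ⊢
  field_simp
  linear_combination hsq

theorem strictAntiMonoAntiOn_chordSlope (hc : 0 < c) (hd : 2 < d) :
    StrictAntiMonoAntiOn (chordSlope c d) (Ioi 0) (tangencyPoint₁ c d) (tangencyPoint₂ c d) := by
  have hr₁ := tangencyPoint₁_pos hc hd
  have hr₁₂ := tangencyPoint₁_lt_tangencyPoint₂ hc hd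
  have hd₀ : 0 < d := by linarith
  refine strictAntiMonoAntiOn_of_hasDerivAt
    (w := fun x ↦ (1 + c * d * x) ^ 2 * (c ^ 2 * d) / (x ^ 2 * (d + c * x) ^ 4))
    (convex_Ioi 0) hr₁ (hr₁.trans hr₁₂) hr₁₂ (fun x (hx : 0 < x) ↦ ?_)
    (fun x (hx : 0 < x) ↦ by positivity)
  refine (hasDerivAt_chordSlope hx.ne' (by positivity)).congr_deriv ?_
  rw [quadratic_eq_mul_sub_tangencyPoint hc.ne' hd₀.ne' (tangency_discrim_pos hd).le]
  ring

theorem continuousOn_chordSlope (hc : 0 < c) (hd : 0 < d) :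
    ContinuousOn (chordSlope c d) (Ioi 0) := fun x (hx : 0 < x) ↦
  (hasDerivAt_chordSlope hx.ne' (by positivity)).continuousAt.continuousWithinAt

end ChordSlope

/-- Main Proposition: for `c > 0`, `d > 2` and `m > 0`, with
`g x = ((1 + c*d*x)/(d + c*x))^3`: if `η₁(c,d) < m < η₂(c,d)` the equation `g x = m*x`
has exactly 3 positive solutions, and if `m = η₁(c,d)` or `m = η₂(c,d)` it has exactly
2 positive solutions. -/
theorem solutions_count (c d m : ℝ) (hc : 0 < c) (hd : 2 < d) (hm : 0 < m) :
    (eta₁ c d < m ∧ m < eta₂ c d →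
      {x : ℝ | 0 < x ∧ ((1 + c * d * x) / (d + c * x)) ^ 3 = m * x}.ncard = 3) ∧
    (m = eta₁ c d ∨ m = eta₂ c d →
      {x : ℝ | 0 < x ∧ ((1 + c * d * x) / (d + c * x)) ^ 3 = m * x}.ncard = 2) := by
  have hd₀ : 0 < d := by linarith
  have hset : {x : ℝ | 0 < x ∧ ((1 + c * d * x) / (d + c * x)) ^ 3 = m * x} =
      {x | x ∈ Ioi 0 ∧ chordSlope c d x = m} :=
    Set.ext fun x ↦ and_congr_right fun hx ↦ (div_eq_iff hx.ne').symm
  have hshape := strictAntiMonoAntiOn_chordSlope hc hd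
  have hcont := continuousOn_chordSlope hc hd₀
  have hleft : ∃ x ∈ Ioi 0 ∩ Iic (tangencyPoint₁ c d), m ≤ chordSlope c d x :=
    (Eventually.and (Ioc_mem_nhdsGT (tangencyPoint₁_pos hc hd))
      ((tendsto_chordSlope_nhdsGT_zero hd₀).eventually_ge_atTop m)).exists
  have hright : ∃ x ∈ Ioi 0 ∩ Ici (tangencyPoint₂ c d), chordSlope c d x ≤ m :=
    (((eventually_gt_atTop 0).and (eventually_ge_atTop _)).and
      ((tendsto_chordSlope_atTop hc).eventually_le_const hm)).exists
  rw [hset, eta₁_eq_chordSlope hc.ne' hd₀.ne', eta₂_eq_chordSlope hc.ne' hd₀.ne']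
  refine ⟨fun hm_between ↦ hshape.ncard_setOf_eq_three hcont hm_between hleft hright, ?_⟩
  rintro (rfl | rfl)
  · exact hshape.ncard_setOf_eq_apply_left hcont hright
  · exact hshape.ncard_setOf_eq_apply_right hcont hleft
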